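/- Let ℏ > 0, ω₁,ω₂ ∈ ℝ, ν₁,ν₂ ∈ ℂ, let Ψ₁,Ψ₂ : ℝ³ → ℂ be Schwartz functions, and let V₁,V₂ : ℝ³ → ℂ admit the Fourier representations V_j(x) = ∫_{ℝ³} e^{i q·x} V̂_j(q) dq with V̂₁,V̂₂ continuous and integrable. Define f_j := (ℏ²/2)ΔΨ_j + (ν_j + V_j)Ψ_j + ω_j ℏ Ψ_j for j = 1,2 (so that Ψ_j solves the stationary Schrödinger equation (ℏ²/2)ΔΨ_j + (ν_j + V_j)Ψ_j = −ω_j ℏ Ψ_j + f_j). Define the ℏ-scaled two-frequency Wigner distribution W(x,p) = (2π)⁻³ ∫_{ℝ³} e^{−i p·y} Ψ₁(x + ℏy/2) conj(Ψ₂(x − ℏy/2)) dy, and F(x,p) = −(i/ℏ)(2π)⁻³ ∫ e^{−i p·y} f₁(x + ℏy/2) conj(Ψ₂(x − ℏy/2)) dy + (i/ℏ)(2π)⁻³ ∫ e^{−i p·y} Ψ₁(x + ℏy/2) conj(f₂(x − ℏy/2)) dy. Then for all x,p ∈ ℝ³: p·∇ₓW(x,p) + i(ω₂ − ω₁)W(x,p)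 + (i/ℏ)(conj(ν₂) − ν₁)W(x,p) = (i/ℏ) ∫ V̂₁(q) e^{i q·x} W(x, p − ℏq/2) dq − (i/ℏ) ∫ conj(V̂₂(q)) e^{−i q·x} W(x, p − ℏq/2) dq + F(x,p). -/

import Mathlib

open MeasureTheory Complex Filter
open scoped RealInnerProductSpace Topology

noncomputable section

/-- The Laplacian of a function on `ℝ³`, as the sum of the repeated directional derivatives
along the coordinate directions. -/
def lap3 (U : EuclideanSpace ℝ (Fin 3) → ℂ) (x : EuclideanSpace ℝ (Fin 3)) : ℂ :=
  ∑ j : Fin 3,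
    fderiv ℝ (fun w => fderiv ℝ U w (EuclideanSpace.single j 1)) x (EuclideanSpace.single j 1)

/-! Write `W(f, g)` for the cross-Wigner distribution. Differentiating under the integral,
`∂_v W(A, B) = W(∂_v A, B) + W(A, ∂_v B)` in the position, while integrating by parts in the
displacement gives `i (p·v) W(A, B) = (ℏ/2) (W(∂_v A, B) - W(A, ∂_v B))`. Applying the second
identity to both terms of the first and summing over an orthonormal basis, the mixed terms cancel:
`i p·∇ₓW(A, B) = (ℏ/2) (W(ΔA, B) - W(A, ΔB))`. The Laplacians are eliminated with the Schrödinger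
equations, and by Fubini a plane wave `e^{iq·x}` multiplying the first factor of `W` becomes the
momentum shift `p ↦ p - ℏq/2`. The symmetry `conj W(f, g) = W(g, f)` transfers what is proved for
the first factor to the second. -/

open Module
open scoped SchwartzMap Laplacian LineDeriv

section Decay

variable {E F : Type*} [NormedAddCommGroup E] [NormedSpace ℝ E] [FiniteDimensional ℝ E]
  [MeasurableSpace E] [BorelSpace E] [NormedAddCommGroup F] [NormedSpace ℝ F]
  {μ : Measure E} [μ.IsAddHaarMeasure]

lemma exists_integrable_bound_comp_add_smul (f : 𝓢(E, F)) {c : ℝ} (hc : c ≠ 0) (x₀ : E) :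
    ∃ bound : E → ℝ, Integrable bound μ ∧
      ∀ x ∈ Metric.ball x₀ 1, ∀ y, ‖f (x + c • y)‖ ≤ bound y := by
  set k := finrank ℝ E + 1
  obtain ⟨C, hdecay⟩ : ∃ C, ∀ z, (1 + ‖z‖) ^ k * ‖f z‖ ≤ C :=
    ⟨_, fun z ↦ by
      simpa using
        SchwartzMap.one_add_le_sup_seminorm_apply (𝕜 := ℝ) (m := (k, 0)) le_rfl le_rfl f z⟩
  refine ⟨fun y ↦ (2 + ‖x₀‖) ^ k * C * (1 + ‖c • y‖) ^ (-(k : ℝ)),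
    ((integrable_one_add_norm (by simp [k])).comp_smul hc).const_mul _, fun x hx y ↦ ?_⟩
  have peetre : 1 + ‖c • y‖ ≤ (2 + ‖x₀‖) * (1 + ‖x + c • y‖) := by
    have hxx₀ : ‖x‖ ≤ 1 + ‖x₀‖ := by
      linarith [norm_le_norm_add_norm_sub' x x₀, mem_ball_iff_norm.mp hx]
    have hy : ‖c • y‖ ≤ ‖x‖ + ‖x + c • y‖ := by
      simpa [add_comm] using norm_sub_le (x + c • y) x
    nlinarith [mul_nonneg (norm_nonneg x₀) (norm_nonneg (x + c • y)), norm_nonneg (x + c • y)]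
  dsimp only
  rw [Real.rpow_neg (by positivity), Real.rpow_natCast, ← div_eq_mul_inv,
    le_div_iff₀ (by positivity)]
  calc ‖f (x + c • y)‖ * (1 + ‖c • y‖) ^ k
      ≤ ‖f (x + c • y)‖ * ((2 + ‖x₀‖) * (1 + ‖x + c • y‖)) ^ k := by gcongr
    _ = (2 + ‖x₀‖) ^ k * ((1 + ‖x + c • y‖) ^ k * ‖f (x + c • y)‖) := by
        rw [mul_pow]; ring
    _ ≤ (2 + ‖x₀‖) ^ k * C := by gcongr; exact hdecay _

end Decay

section Correlation

variable {E : Type*} [NormedAddCommGroup E] [NormedSpace ℝ E]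

/-- The two-point product `f(x + ℏy/2) conj(g(x - ℏy/2))`, whose Fourier transform in the
displacement `y` is the cross-Wigner distribution at the position `x`. -/
def wignerCorrelation (ℏ : ℝ) (f g : E → ℂ) (x y : E) : ℂ :=
  f (x + (ℏ / 2) • y) * (starRingEnd ℂ) (g (x - (ℏ / 2) • y))

variable {ℏ : ℝ}

lemma conj_wignerCorrelation (f g : E → ℂ) (x y : E) :
    (starRingEnd ℂ) (wignerCorrelation ℏ f g x y) = wignerCorrelation ℏ g f x (-y) := by
  simp [wignerCorrelation, sub_eq_add_neg, mul_comm]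

lemma wignerCorrelation_const_mul_left (a : ℂ) (f g : E → ℂ) (x : E) :
    wignerCorrelation ℏ (fun z ↦ a * f z) g x = fun y ↦ a * wignerCorrelation ℏ f g x y := by
  ext y
  simp only [wignerCorrelation, mul_assoc]

lemma wignerCorrelation_add_left (f₁ f₂ g : E → ℂ) (x : E) :
    wignerCorrelation ℏ (fun z ↦ f₁ z + f₂ z) g x =
      fun y ↦ wignerCorrelation ℏ f₁ g x y + wignerCorrelation ℏ f₂ g x y := by
  ext y
  simp only [wignerCorrelation, add_mul]

/-- The derivative of `wignerCorrelation ℏ f g x y` in the position `x`. -/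
def wignerCorrelationFDeriv (ℏ : ℝ) (f g : E → ℂ) (x y : E) : E →L[ℝ] ℂ :=
  f (x + (ℏ / 2) • y) • (conjCLE : ℂ →L[ℝ] ℂ).comp (fderiv ℝ g (x - (ℏ / 2) • y)) +
    (starRingEnd ℂ) (g (x - (ℏ / 2) • y)) • fderiv ℝ f (x + (ℏ / 2) • y)

lemma hasFDerivAt_wignerCorrelation {f g : E → ℂ} (hf : Differentiable ℝ f)
    (hg : Differentiable ℝ g) (x y : E) :
    HasFDerivAt (fun x' ↦ wignerCorrelation ℏ f g x' y) (wignerCorrelationFDeriv ℏ f g x y) x := by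
  have hf' := (hf (x + (ℏ / 2) • y)).hasFDerivAt.comp x ((hasFDerivAt_id x).add_const _)
  have hg' := (hg (x - (ℏ / 2) • y)).hasFDerivAt.comp x ((hasFDerivAt_id x).sub_const _)
  exact hf'.mul (conjCLE.hasFDerivAt.comp x hg')

lemma wignerCorrelationFDeriv_apply (A B : 𝓢(E, ℂ)) (x y v : E) :
    wignerCorrelationFDeriv ℏ A B x y v =
      wignerCorrelation ℏ (∂_{v} A : 𝓢(E, ℂ)) B x y +
        wignerCorrelation ℏ A (∂_{v} B : 𝓢(E, ℂ)) x y := by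
  simp [wignerCorrelationFDeriv, wignerCorrelation, SchwartzMap.lineDerivOp_apply_eq_fderiv,
    add_comm, mul_comm]

lemma continuous_wignerCorrelationFDeriv {f g : E → ℂ} (hf : ContDiff ℝ 1 f)
    (hg : ContDiff ℝ 1 g) (x : E) : Continuous (wignerCorrelationFDeriv ℏ f g x) := by
  have := hf.continuous
  have := hg.continuous
  have := hf.continuous_fderiv one_ne_zero
  have := hg.continuous_fderiv one_ne_zero
  unfold wignerCorrelationFDeriv
  fun_prop

lemma norm_wignerCorrelationFDeriv_le (f g : E → ℂ) (x y : E) :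
    ‖wignerCorrelationFDeriv ℏ f g x y‖ ≤
      ‖f (x + (ℏ / 2) • y)‖ * ‖fderiv ℝ g (x - (ℏ / 2) • y)‖ +
        ‖g (x - (ℏ / 2) • y)‖ * ‖fderiv ℝ f (x + (ℏ / 2) • y)‖ := by
  refine (norm_add_le _ _).trans_eq ?_
  rw [norm_smul, norm_smul, RCLike.norm_conj]
  congr 2
  exact conjLIE.toLinearIsometry.norm_toContinuousLinearMap_comp

lemma hasLineDerivAt_wignerCorrelation (A B : 𝓢(E, ℂ)) (x y v : E) :
    HasLineDerivAt ℝ (wignerCorrelation ℏ A B x)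
      ((ℏ / 2) * (wignerCorrelation ℏ (∂_{v} A : 𝓢(E, ℂ)) B x y -
        wignerCorrelation ℏ A (∂_{v} B : 𝓢(E, ℂ)) x y)) y v := by
  have hscale : HasFDerivAt (fun y : E ↦ (ℏ / 2) • y) ((ℏ / 2) • .id ℝ E) y :=
    (hasFDerivAt_id y).const_smul _
  have hA := (A.hasFDerivAt (x + (ℏ / 2) • y)).comp y (hscale.const_add x)
  have hB := (B.hasFDerivAt (x - (ℏ / 2) • y)).comp y (hscale.const_sub x)
  convert! (hA.mul (conjCLE.hasFDerivAt.comp y hB)).hasLineDerivAt v using 1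
  simp only [wignerCorrelation, SchwartzMap.lineDerivOp_apply_eq_fderiv, Function.comp_apply,
    ContinuousLinearMap.comp_neg, ContinuousLinearMap.comp_smulₛₗ, Real.ringHom_apply,
    ContinuousLinearMap.comp_id, smul_neg, ContinuousAlgEquiv.coe_coeCLE, conjCAE_apply,
    add_apply, neg_apply, smul_apply, ContinuousLinearMap.comp_apply,
    ContinuousLinearEquiv.coe_coe, ContinuousAlgEquiv.coeCLE_apply, real_smul, ofReal_div,
    ofReal_ofNat, smul_eq_mul]
  ring

variable [FiniteDimensional ℝ E] [MeasurableSpace E] [BorelSpace E] {μ : Measure E}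
  [μ.IsAddHaarMeasure]

lemma integrable_wignerCorrelation (hℏ : ℏ ≠ 0) (A B : 𝓢(E, ℂ)) (x : E) :
    Integrable (wignerCorrelation ℏ A B x) μ := by
  have hA : Integrable (fun y ↦ A (x + (ℏ / 2) • y)) μ :=
    ((A.integrable (μ := μ)).comp_add_left x).comp_smul (div_ne_zero hℏ two_ne_zero)
  have hB : Continuous fun y ↦ (starRingEnd ℂ) (B (x - (ℏ / 2) • y)) := by
    fun_prop
  exact hA.mul_bdd hB.aestronglyMeasurable
    (.of_forall fun y ↦ by simpa using B.norm_le_seminorm ℝ (x - (ℏ / 2) • y))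

lemma exists_integrable_bound_wignerCorrelationFDeriv (hℏ : ℏ ≠ 0) (A B : 𝓢(E, ℂ)) (x₀ : E) :
    ∃ bound : E → ℝ, Integrable bound μ ∧
      ∀ x ∈ Metric.ball x₀ 1, ∀ y, ‖wignerCorrelationFDeriv ℏ A B x y‖ ≤ bound y := by
  have hc : ℏ / 2 ≠ 0 := div_ne_zero hℏ two_ne_zero
  obtain ⟨a, ha, hA⟩ := exists_integrable_bound_comp_add_smul (μ := μ) A hc x₀
  obtain ⟨a', ha', hA'⟩ := exists_integrable_bound_comp_add_smul (μ := μ)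
    (SchwartzMap.fderivCLM ℝ E ℂ A) hc x₀
  refine ⟨fun y ↦ a y * SchwartzMap.seminorm ℝ 0 0 (SchwartzMap.fderivCLM ℝ E ℂ B) +
    SchwartzMap.seminorm ℝ 0 0 B * a' y, (ha.mul_const _).add (ha'.const_mul _),
    fun x hx y ↦ (norm_wignerCorrelationFDeriv_le _ _ _ _).trans ?_⟩
  dsimp only
  gcongr
  · exact (norm_nonneg _).trans (hA x hx y)
  · exact hA x hx y
  · exact (SchwartzMap.fderivCLM ℝ E ℂ B).norm_le_seminorm ℝ _
  · exact B.norm_le_seminorm ℝ _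
  · exact hA' x hx y

end Correlation

variable {E : Type*} [NormedAddCommGroup E] [InnerProductSpace ℝ E]

section PlaneWave

variable (p y : E)

lemma norm_exp_neg_I_mul_inner : ‖exp (-(I * (⟪p, y⟫ : ℂ)))‖ = 1 := by
  simp [norm_exp]

lemma hasLineDerivAt_exp_neg_I_mul_inner (v : E) :
    HasLineDerivAt ℝ (fun y ↦ exp (-(I * (⟪p, y⟫ : ℂ))))
      (-(I * ⟪p, v⟫) * exp (-(I * (⟪p, y⟫ : ℂ)))) y v := by
  have hinner := (ofRealCLM.comp (innerSL ℝ p)).hasFDerivAt (x := y)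
  simpa [mul_comm] using (hinner.const_mul I).neg.cexp.hasLineDerivAt v

lemma exp_I_mul_inner_mul_exp_neg_I_mul_inner_sub_smul (c : ℝ) (q x : E) :
    exp (I * (⟪q, x⟫ : ℂ)) * exp (-(I * (⟪p - c • q, y⟫ : ℂ))) =
      exp (-(I * (⟪p, y⟫ : ℂ))) * exp (I * (⟪q, x + c • y⟫ : ℂ)) := by
  rw [← exp_add, ← exp_add, inner_add_right, inner_sub_left, real_inner_smul_right,
    real_inner_smul_left]
  push_cast
  ring_nf

end PlaneWave

variable [FiniteDimensional ℝ E] [MeasurableSpace E] [BorelSpace E]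

lemma integrable_exp_neg_I_mul_inner_mul {f : E → ℂ} (hf : Integrable f) (p : E) :
    Integrable fun y ↦ exp (-(I * (⟪p, y⟫ : ℂ))) * f y :=
  hf.bdd_mul (by fun_prop) (.of_forall fun y ↦ (norm_exp_neg_I_mul_inner p y).le)

/-- The `ℏ`-scaled cross-Wigner distribution
`(2π)^{-d} ∫ e^{-ip·y} f(x + ℏy/2) conj(g(x - ℏy/2)) dy` on a `d`-dimensional Euclidean space. -/
def crossWigner (ℏ : ℝ) (f g : E → ℂ) (x p : E) : ℂ :=
  (((2 * Real.pi) ^ finrank ℝ E)⁻¹ : ℝ) *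
    ∫ y, exp (-(I * (⟪p, y⟫ : ℂ))) * wignerCorrelation ℏ f g x y

section CrossWigner

variable {ℏ : ℝ}

lemma conj_crossWigner (f g : E → ℂ) (x p : E) :
    (starRingEnd ℂ) (crossWigner ℏ f g x p) = crossWigner ℏ g f x p := by
  rw [crossWigner, crossWigner, map_mul, conj_ofReal, ← integral_conj, ← integral_neg_eq_self]
  simp [conj_wignerCorrelation, ← exp_conj]

lemma crossWigner_const_mul_left (a : ℂ) (f g : E → ℂ) (x p : E) :
    crossWigner ℏ (fun z ↦ a * f z) g x p = a * crossWigner ℏ f g x p := by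
  simp only [crossWigner, wignerCorrelation_const_mul_left, mul_left_comm _ a, integral_const_mul]

lemma crossWigner_add_left {f₁ f₂ g : E → ℂ} {x : E}
    (hf₁ : Integrable (wignerCorrelation ℏ f₁ g x))
    (hf₂ : Integrable (wignerCorrelation ℏ f₂ g x)) (p : E) :
    crossWigner ℏ (fun z ↦ f₁ z + f₂ z) g x p =
      crossWigner ℏ f₁ g x p + crossWigner ℏ f₂ g x p := by
  rw [crossWigner, crossWigner, crossWigner, ← mul_add,
    ← integral_add (integrable_exp_neg_I_mul_inner_mul hf₁ p)
      (integrable_exp_neg_I_mul_inner_mul hf₂ p)]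
  simp only [wignerCorrelation_add_left, mul_add]

lemma crossWigner_sum_left {ι : Type*} (s : Finset ι) {f : ι → E → ℂ} {g : E → ℂ} {x : E}
    (hf : ∀ i ∈ s, Integrable (wignerCorrelation ℏ (f i) g x)) (p : E) :
    crossWigner ℏ (fun z ↦ ∑ i ∈ s, f i z) g x p = ∑ i ∈ s, crossWigner ℏ (f i) g x p := by
  simp only [crossWigner]
  rw [← Finset.mul_sum,
    ← integral_finsetSum s fun i hi ↦ integrable_exp_neg_I_mul_inner_mul (hf i hi) p]
  simp only [wignerCorrelation, Finset.sum_mul, Finset.mul_sum]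

end CrossWigner

section Transport

variable {ℏ : ℝ}

lemma I_mul_inner_mul_crossWigner (hℏ : ℏ ≠ 0) (A B : 𝓢(E, ℂ)) (x p v : E) :
    I * ⟪p, v⟫ * crossWigner ℏ A B x p =
      (ℏ / 2) * (crossWigner ℏ (∂_{v} A : 𝓢(E, ℂ)) B x p -
        crossWigner ℏ A (∂_{v} B : 𝓢(E, ℂ)) x p) := by
  have hexp (A B : 𝓢(E, ℂ)) := integrable_exp_neg_I_mul_inner_mul
    (integrable_wignerCorrelation hℏ A B x) p
  have hparts := integral_bilinear_hasLineDerivAt_right_eq_neg_left_of_integrable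
    (μ := volume) (B := ContinuousLinearMap.mul ℝ ℂ)
    (by simpa [mul_assoc] using (hexp A B).const_mul (-(I * ⟪p, v⟫)))
    (by simpa [mul_left_comm, mul_sub] using
      ((hexp (∂_{v} A) B).sub (hexp A (∂_{v} B))).const_mul ((ℏ / 2 : ℂ)))
    (hexp A B)
    (fun y _ ↦ hasLineDerivAt_exp_neg_I_mul_inner p y v)
    (fun y _ ↦ hasLineDerivAt_wignerCorrelation A B x y v)
  simp only [ContinuousLinearMap.mul_apply', mul_left_comm _ (ℏ / 2 : ℂ), mul_assoc (-(I * _)),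
    mul_sub (exp _), integral_const_mul, integral_sub (hexp (∂_{v} A) B) (hexp A (∂_{v} B))]
    at hparts
  simp only [crossWigner]
  linear_combination -(((2 * Real.pi) ^ finrank ℝ E)⁻¹ : ℝ) * hparts

lemma integrable_exp_smul_wignerCorrelationFDeriv (hℏ : ℏ ≠ 0) (A B : 𝓢(E, ℂ)) (x p : E) :
    Integrable fun y ↦ exp (-(I * (⟪p, y⟫ : ℂ))) • wignerCorrelationFDeriv ℏ A B x y := by
  obtain ⟨bound, hbound, hle⟩ :=
    exists_integrable_bound_wignerCorrelationFDeriv (μ := volume) hℏ A B x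
  have hcont := continuous_wignerCorrelationFDeriv (ℏ := ℏ) (A.smooth 1) (B.smooth 1) x
  have hcont' : Continuous fun y ↦
      exp (-(I * (⟪p, y⟫ : ℂ))) • wignerCorrelationFDeriv ℏ A B x y := by
    fun_prop
  refine hbound.mono' hcont'.aestronglyMeasurable (.of_forall fun y ↦ ?_)
  rw [norm_smul, norm_exp_neg_I_mul_inner, one_mul]
  exact hle x (Metric.mem_ball_self one_pos) y

lemma hasFDerivAt_crossWigner (hℏ : ℏ ≠ 0) (A B : 𝓢(E, ℂ)) (x p : E) :
    HasFDerivAt (fun x' ↦ crossWigner ℏ A B x' p)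
      (((((2 * Real.pi) ^ finrank ℝ E)⁻¹ : ℝ) : ℂ) •
        ∫ y, exp (-(I * (⟪p, y⟫ : ℂ))) • wignerCorrelationFDeriv ℏ A B x y) x := by
  obtain ⟨bound, hbound, hle⟩ :=
    exists_integrable_bound_wignerCorrelationFDeriv (μ := volume) hℏ A B x
  have hexp (x : E) := integrable_exp_neg_I_mul_inner_mul (integrable_wignerCorrelation hℏ A B x) p
  refine (hasFDerivAt_integral_of_dominated_of_fderiv_le
    (F' := fun x y ↦ exp (-(I * (⟪p, y⟫ : ℂ))) • wignerCorrelationFDeriv ℏ A B x y)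
    (Metric.ball_mem_nhds x one_pos)
    (.of_forall fun x ↦ (hexp x).aestronglyMeasurable) (hexp x)
    (integrable_exp_smul_wignerCorrelationFDeriv hℏ A B x p).aestronglyMeasurable
    (.of_forall fun y x' hx' ↦ ?_) hbound (.of_forall fun y x' _ ↦ ?_)).const_mul _
  · rw [norm_smul, norm_exp_neg_I_mul_inner, one_mul]
    exact hle x' hx' y
  · exact (hasFDerivAt_wignerCorrelation A.differentiable B.differentiable x' y).const_mul _

lemma fderiv_crossWigner_apply (hℏ : ℏ ≠ 0) (A B : 𝓢(E, ℂ)) (x p v : E) :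
    fderiv ℝ (fun x' ↦ crossWigner ℏ A B x' p) x v =
      crossWigner ℏ (∂_{v} A : 𝓢(E, ℂ)) B x p + crossWigner ℏ A (∂_{v} B : 𝓢(E, ℂ)) x p := by
  have hexp (A B : 𝓢(E, ℂ)) := integrable_exp_neg_I_mul_inner_mul
    (integrable_wignerCorrelation hℏ A B x) p
  rw [(hasFDerivAt_crossWigner hℏ A B x p).fderiv, smul_apply,
    ContinuousLinearMap.integral_apply (integrable_exp_smul_wignerCorrelationFDeriv hℏ A B x p)]
  simp only [smul_apply, wignerCorrelationFDeriv_apply, smul_eq_mul, mul_add,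
    integral_add (hexp (∂_{v} A) B) (hexp A (∂_{v} B)), crossWigner]

lemma crossWigner_laplacian_left {ι : Type*} [Fintype ι] (b : OrthonormalBasis ι ℝ E)
    (hℏ : ℏ ≠ 0) (A B : 𝓢(E, ℂ)) (x p : E) :
    crossWigner ℏ (Δ A : 𝓢(E, ℂ)) B x p =
      ∑ i, crossWigner ℏ (∂_{b i} (∂_{b i} A) : 𝓢(E, ℂ)) B x p := by
  have hΔA : ((Δ A : 𝓢(E, ℂ)) : E → ℂ) =
      fun z ↦ ∑ i, (∂_{b i} (∂_{b i} A) : 𝓢(E, ℂ)) z := by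
    ext z
    rw [SchwartzMap.laplacian_eq_sum b, sum_apply]
  rw [hΔA, crossWigner_sum_left _ fun i _ ↦ integrable_wignerCorrelation hℏ _ B x]

lemma crossWigner_laplacian_right {ι : Type*} [Fintype ι] (b : OrthonormalBasis ι ℝ E)
    (hℏ : ℏ ≠ 0) (A B : 𝓢(E, ℂ)) (x p : E) :
    crossWigner ℏ A (Δ B : 𝓢(E, ℂ)) x p =
      ∑ i, crossWigner ℏ A (∂_{b i} (∂_{b i} B) : 𝓢(E, ℂ)) x p := by
  simp only [← conj_crossWigner _ A, crossWigner_laplacian_left b hℏ, map_sum]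

theorem I_mul_fderiv_crossWigner (hℏ : ℏ ≠ 0) (A B : 𝓢(E, ℂ)) (x p : E) :
    I * fderiv ℝ (fun x' ↦ crossWigner ℏ A B x' p) x p =
      (ℏ / 2) * (crossWigner ℏ (Δ A : 𝓢(E, ℂ)) B x p - crossWigner ℏ A (Δ B : 𝓢(E, ℂ)) x p) := by
  let b := stdOrthonormalBasis ℝ E
  have hexpand (L : E →L[ℝ] ℂ) : L p = ∑ i, (⟪p, b i⟫ : ℂ) * L (b i) := by
    conv_lhs => rw [← b.sum_repr' p]
    simp [real_inner_comm]
  rw [hexpand, crossWigner_laplacian_left b hℏ, crossWigner_laplacian_right b hℏ,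
    ← Finset.sum_sub_distrib, Finset.mul_sum, Finset.mul_sum]
  refine Finset.sum_congr rfl fun i _ ↦ ?_
  rw [fderiv_crossWigner_apply hℏ]
  linear_combination I_mul_inner_mul_crossWigner hℏ (∂_{b i} A) B x p (b i) +
    I_mul_inner_mul_crossWigner hℏ A (∂_{b i} B) x p (b i)

end Transport

/-- The potential `V(x) = ∫ e^{iq·x} h(q) dq` with Fourier density `h`. -/
def fourierPotential (h : E → ℂ) (x : E) : ℂ :=
  ∫ q, exp (I * (⟪q, x⟫ : ℂ)) * h q

section Potential

variable {ℏ : ℝ} {h : E → ℂ}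

lemma continuous_fourierPotential (hh : Integrable h) : Continuous (fourierPotential h) :=
  continuous_of_dominated (fun x ↦ (by fun_prop : Continuous _).aestronglyMeasurable.mul hh.1)
    (fun x ↦ .of_forall fun q ↦ by rw [norm_mul, norm_exp_I_mul_ofReal, one_mul]) hh.norm
    (.of_forall fun q ↦ by fun_prop)

lemma norm_fourierPotential_le (h : E → ℂ) (x : E) : ‖fourierPotential h x‖ ≤ ∫ q, ‖h q‖ :=
  (norm_integral_le_integral_norm _).trans_eq <| by simp [norm_exp_I_mul_ofReal]

lemma integrable_wignerCorrelation_fourierPotential_mul (hh : Integrable h) {f g : E → ℂ} {x : E}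
    (hfg : Integrable (wignerCorrelation ℏ f g x)) :
    Integrable (wignerCorrelation ℏ (fun z ↦ fourierPotential h z * f z) g x) := by
  have := continuous_fourierPotential hh
  have hV : Continuous fun y ↦ fourierPotential h (x + (ℏ / 2) • y) := by
    fun_prop
  refine (hfg.bdd_mul hV.aestronglyMeasurable
    (.of_forall fun y ↦ norm_fourierPotential_le h _)).congr (.of_forall fun y ↦ ?_)
  simp only [wignerCorrelation, mul_assoc]

lemma integrable_prod_planeWaves_mul (hh : Integrable h) {u : E → ℂ} (hu : Integrable u) (c : ℝ)
    (x p : E) :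
    Integrable (fun z : E × E ↦ exp (-(I * (⟪p, z.1⟫ : ℂ))) *
      exp (I * (⟪z.2, x + c • z.1⟫ : ℂ)) * (u z.1 * h z.2)) (volume.prod volume) := by
  refine (hu.mul_prod hh).bdd_mul (c := 1) (by fun_prop) (.of_forall fun z ↦ ?_)
  rw [norm_mul, norm_exp_neg_I_mul_inner, norm_exp_I_mul_ofReal, one_mul]

theorem crossWigner_fourierPotential_mul_left (hh : Integrable h) {f g : E → ℂ} {x : E}
    (hfg : Integrable (wignerCorrelation ℏ f g x)) (p : E) :
    crossWigner ℏ (fun z ↦ fourierPotential h z * f z) g x p =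
      ∫ q, h q * exp (I * (⟪q, x⟫ : ℂ)) * crossWigner ℏ f g x (p - (ℏ / 2) • q) := by
  simp only [crossWigner, mul_left_comm _ ((_ : ℝ) : ℂ), integral_const_mul]
  congr 1
  calc ∫ y, exp (-(I * (⟪p, y⟫ : ℂ))) *
        wignerCorrelation ℏ (fun z ↦ fourierPotential h z * f z) g x y
      = ∫ y, ∫ q, exp (-(I * (⟪p, y⟫ : ℂ))) * exp (I * (⟪q, x + (ℏ / 2) • y⟫ : ℂ)) *
          (wignerCorrelation ℏ f g x y * h q) := by
        congr! 2 with y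
        rw [wignerCorrelation, fourierPotential, mul_assoc, ← integral_mul_const,
          ← integral_const_mul]
        congr! 2
        rw [wignerCorrelation]
        ring
    _ = ∫ q, ∫ y, exp (-(I * (⟪p, y⟫ : ℂ))) * exp (I * (⟪q, x + (ℏ / 2) • y⟫ : ℂ)) *
          (wignerCorrelation ℏ f g x y * h q) :=
        integral_integral_swap (integrable_prod_planeWaves_mul hh hfg (ℏ / 2) x p)
    _ = ∫ q, h q * exp (I * (⟪q, x⟫ : ℂ)) *
          ∫ y, exp (-(I * (⟪p - (ℏ / 2) • q, y⟫ : ℂ))) * wignerCorrelation ℏ f g x y := by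
        congr! 2 with q
        rw [← integral_const_mul]
        congr! 2
        rw [← exp_I_mul_inner_mul_exp_neg_I_mul_inner_sub_smul]
        ring

end Potential

/-- The source term `f = (ℏ²/2)ΔΨ + (ν + V)Ψ + ωℏΨ` left over when `Ψ` is inserted into the
stationary Schrödinger equation of frequency `ω`, the potential `V` having Fourier density `h`. -/
def schroedingerSource (ℏ ω : ℝ) (ν : ℂ) (h Ψ : E → ℂ) (x : E) : ℂ :=
  (ℏ : ℂ) ^ 2 / 2 * Δ Ψ x + (ν + fourierPotential h x) * Ψ x + ω * ℏ * Ψ x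

section Schroedinger

variable {ℏ : ℝ} {h : E → ℂ}

theorem crossWigner_schroedingerSource_left (hℏ : ℏ ≠ 0) (ω : ℝ) (ν : ℂ) (hh : Integrable h)
    (Ψ Φ : 𝓢(E, ℂ)) (x p : E) :
    crossWigner ℏ (schroedingerSource ℏ ω ν h Ψ) Φ x p =
      (ℏ : ℂ) ^ 2 / 2 * crossWigner ℏ (Δ Ψ : 𝓢(E, ℂ)) Φ x p + (ν + ω * ℏ) * crossWigner ℏ Ψ Φ x p +
        ∫ q, h q * exp (I * (⟪q, x⟫ : ℂ)) * crossWigner ℏ Ψ Φ x (p - (ℏ / 2) • q) := by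
  have hsource : schroedingerSource ℏ ω ν h Ψ = fun z ↦
      ((ℏ : ℂ) ^ 2 / 2 * (Δ Ψ : 𝓢(E, ℂ)) z + (ν + ω * ℏ) * Ψ z) + fourierPotential h z * Ψ z := by
    ext z
    rw [schroedingerSource, SchwartzMap.laplacian_apply]
    ring
  have hΨΦ := integrable_wignerCorrelation (μ := volume) hℏ Ψ Φ x
  have hΔΨ : Integrable
      (wignerCorrelation ℏ (fun z ↦ (ℏ : ℂ) ^ 2 / 2 * (Δ Ψ : 𝓢(E, ℂ)) z) Φ x) := by
    rw [wignerCorrelation_const_mul_left]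
    exact (integrable_wignerCorrelation hℏ (Δ Ψ) Φ x).const_mul _
  have hνΨ : Integrable (wignerCorrelation ℏ (fun z ↦ (ν + ω * ℏ) * Ψ z) Φ x) := by
    rw [wignerCorrelation_const_mul_left]
    exact hΨΦ.const_mul _
  have hΔΨ_add_νΨ : Integrable (wignerCorrelation ℏ
      (fun z ↦ (ℏ : ℂ) ^ 2 / 2 * (Δ Ψ : 𝓢(E, ℂ)) z + (ν + ω * ℏ) * Ψ z) Φ x) := by
    rw [wignerCorrelation_add_left]
    exact hΔΨ.add hνΨ
  rw [hsource, crossWigner_add_left hΔΨ_add_νΨ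
      (integrable_wignerCorrelation_fourierPotential_mul hh hΨΦ),
    crossWigner_add_left hΔΨ hνΨ, crossWigner_const_mul_left, crossWigner_const_mul_left,
    crossWigner_fourierPotential_mul_left hh hΨΦ]

theorem crossWigner_schroedingerSource_right (hℏ : ℏ ≠ 0) (ω : ℝ) (ν : ℂ) (hh : Integrable h)
    (Ψ Φ : 𝓢(E, ℂ)) (x p : E) :
    crossWigner ℏ Ψ (schroedingerSource ℏ ω ν h Φ) x p =
      (ℏ : ℂ) ^ 2 / 2 * crossWigner ℏ Ψ (Δ Φ : 𝓢(E, ℂ)) x p +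
        ((starRingEnd ℂ) ν + ω * ℏ) * crossWigner ℏ Ψ Φ x p +
        ∫ q, (starRingEnd ℂ) (h q) * exp (-(I * (⟪q, x⟫ : ℂ))) *
          crossWigner ℏ Ψ Φ x (p - (ℏ / 2) • q) := by
  rw [← conj_crossWigner, crossWigner_schroedingerSource_left hℏ ω ν hh]
  simp [conj_crossWigner, ← integral_conj, ← exp_conj, map_ofNat]

end Schroedinger

theorem two_frequency_wigner_moyal_schroedinger_general {ℏ : ℝ} (hℏ : ℏ ≠ 0) (ω₁ ω₂ : ℝ)
    (ν₁ ν₂ : ℂ) (Ψ₁ Ψ₂ : 𝓢(E, ℂ)) {h₁ h₂ : E → ℂ} (hh₁ : Integrable h₁) (hh₂ : Integrable h₂)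
    (x p : E) :
    fderiv ℝ (fun x' ↦ crossWigner ℏ Ψ₁ Ψ₂ x' p) x p
        + I * (ω₂ - ω₁) * crossWigner ℏ Ψ₁ Ψ₂ x p
        + I / ℏ * ((starRingEnd ℂ) ν₂ - ν₁) * crossWigner ℏ Ψ₁ Ψ₂ x p
      = I / ℏ * (∫ q, h₁ q * exp (I * (⟪q, x⟫ : ℂ)) * crossWigner ℏ Ψ₁ Ψ₂ x (p - (ℏ / 2) • q))
        - I / ℏ * (∫ q, (starRingEnd ℂ) (h₂ q) * exp (-(I * (⟪q, x⟫ : ℂ))) *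
            crossWigner ℏ Ψ₁ Ψ₂ x (p - (ℏ / 2) • q))
        + (-(I / ℏ) * crossWigner ℏ (schroedingerSource ℏ ω₁ ν₁ h₁ Ψ₁) Ψ₂ x p
          + I / ℏ * crossWigner ℏ Ψ₁ (schroedingerSource ℏ ω₂ ν₂ h₂ Ψ₂) x p) := by
  have hℏ' : (ℏ : ℂ) ≠ 0 := ofReal_ne_zero.mpr hℏ
  have htransport : fderiv ℝ (fun x' ↦ crossWigner ℏ Ψ₁ Ψ₂ x' p) x p =
      -I * (ℏ / 2 * (crossWigner ℏ (Δ Ψ₁ : 𝓢(E, ℂ)) Ψ₂ x p -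
        crossWigner ℏ Ψ₁ (Δ Ψ₂ : 𝓢(E, ℂ)) x p)) := by
    rw [← I_mul_fderiv_crossWigner hℏ, ← mul_assoc, neg_mul, I_mul_I, neg_neg, one_mul]
  rw [htransport, crossWigner_schroedingerSource_left hℏ ω₁ ν₁ hh₁,
    crossWigner_schroedingerSource_right hℏ ω₂ ν₂ hh₂]
  field_simp
  ring

lemma lap3_eq_laplacian (Ψ : 𝓢(EuclideanSpace ℝ (Fin 3), ℂ)) (x : EuclideanSpace ℝ (Fin 3)) :
    lap3 Ψ x = Δ (Ψ : EuclideanSpace ℝ (Fin 3) → ℂ) x := by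
  rw [← SchwartzMap.laplacian_apply]
  simp [lap3, SchwartzMap.laplacian_eq_sum (EuclideanSpace.basisFun (Fin 3) ℝ),
    ← SchwartzMap.lineDerivOp_apply_eq_fderiv]

/-- The two-frequency Wigner–Moyal equation for stationary Schrödinger
wave functions `(ℏ²/2)ΔΨ_j + (ν_j + V_j)Ψ_j = −ω_j ℏ Ψ_j + f_j`, for the ℏ-scaled
two-frequency Wigner distribution
`W(x,p) = (2π)⁻³ ∫ e^{−i p·y} Ψ₁(x + ℏy/2) conj(Ψ₂(x − ℏy/2)) dy`:
`p·∇ₓW + i(ω₂ − ω₁)W + (i/ℏ)(conj ν₂ − ν₁)W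
  = (i/ℏ)∫ V̂₁(q) e^{i q·x} W(x, p − ℏq/2) dq
    − (i/ℏ)∫ conj(V̂₂(q)) e^{−i q·x} W(x, p − ℏq/2) dq + F`. -/
theorem two_frequency_wigner_moyal_schroedinger
    (ℏ : ℝ) (hℏ : 0 < ℏ) (ω₁ ω₂ : ℝ) (ν₁ ν₂ : ℂ)
    (Ψ₁ Ψ₂ : SchwartzMap (EuclideanSpace ℝ (Fin 3)) ℂ)
    (V₁ V₂ : EuclideanSpace ℝ (Fin 3) → ℂ)
    (Vh₁ Vh₂ : EuclideanSpace ℝ (Fin 3) → ℂ)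
    (hVh₁c : Continuous Vh₁) (hVh₂c : Continuous Vh₂)
    (hVh₁i : Integrable Vh₁) (hVh₂i : Integrable Vh₂)
    (hV₁ : ∀ x, V₁ x = ∫ q : EuclideanSpace ℝ (Fin 3),
      Complex.exp (Complex.I * (⟪q, x⟫ : ℂ)) * Vh₁ q)
    (hV₂ : ∀ x, V₂ x = ∫ q : EuclideanSpace ℝ (Fin 3),
      Complex.exp (Complex.I * (⟪q, x⟫ : ℂ)) * Vh₂ q)
    (f₁ f₂ : EuclideanSpace ℝ (Fin 3) → ℂ)
    (hf₁ : ∀ x, f₁ x = ((ℏ : ℂ) ^ 2 / 2) * lap3 (fun w => Ψ₁ w) x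
      + (ν₁ + V₁ x) * Ψ₁ x + (ω₁ : ℂ) * (ℏ : ℂ) * Ψ₁ x)
    (hf₂ : ∀ x, f₂ x = ((ℏ : ℂ) ^ 2 / 2) * lap3 (fun w => Ψ₂ w) x
      + (ν₂ + V₂ x) * Ψ₂ x + (ω₂ : ℂ) * (ℏ : ℂ) * Ψ₂ x)
    (W : EuclideanSpace ℝ (Fin 3) → EuclideanSpace ℝ (Fin 3) → ℂ)
    (hW : ∀ x p : EuclideanSpace ℝ (Fin 3), W x p =
      ((2 * Real.pi) ^ 3 : ℝ)⁻¹ *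
        ∫ y : EuclideanSpace ℝ (Fin 3),
          Complex.exp (-(Complex.I * (⟪p, y⟫ : ℂ))) *
            Ψ₁ (x + (ℏ / 2) • y) * (starRingEnd ℂ) (Ψ₂ (x - (ℏ / 2) • y)))
    (F : EuclideanSpace ℝ (Fin 3) → EuclideanSpace ℝ (Fin 3) → ℂ)
    (hF : ∀ x p : EuclideanSpace ℝ (Fin 3), F x p =
      -(Complex.I / (ℏ : ℂ)) * ((2 * Real.pi) ^ 3 : ℝ)⁻¹ *
          (∫ y : EuclideanSpace ℝ (Fin 3),
            Complex.exp (-(Complex.I * (⟪p, y⟫ : ℂ))) *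
              f₁ (x + (ℏ / 2) • y) * (starRingEnd ℂ) (Ψ₂ (x - (ℏ / 2) • y)))
        + (Complex.I / (ℏ : ℂ)) * ((2 * Real.pi) ^ 3 : ℝ)⁻¹ *
          (∫ y : EuclideanSpace ℝ (Fin 3),
            Complex.exp (-(Complex.I * (⟪p, y⟫ : ℂ))) *
              Ψ₁ (x + (ℏ / 2) • y) * (starRingEnd ℂ) (f₂ (x - (ℏ / 2) • y)))) :
    ∀ x p : EuclideanSpace ℝ (Fin 3),
      fderiv ℝ (fun x' => W x' p) x p
          + Complex.I * ((ω₂ : ℂ) - (ω₁ : ℂ)) * W x p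
          + (Complex.I / (ℏ : ℂ)) * ((starRingEnd ℂ) ν₂ - ν₁) * W x p
        = (Complex.I / (ℏ : ℂ)) *
            (∫ q : EuclideanSpace ℝ (Fin 3),
              Vh₁ q * Complex.exp (Complex.I * (⟪q, x⟫ : ℂ)) * W x (p - (ℏ / 2) • q))
          - (Complex.I / (ℏ : ℂ)) *
            (∫ q : EuclideanSpace ℝ (Fin 3),
              (starRingEnd ℂ) (Vh₂ q) * Complex.exp (-(Complex.I * (⟪q, x⟫ : ℂ))) *
                W x (p - (ℏ / 2) • q))
          + F x p := by
  obtain rfl : f₁ = schroedingerSource ℏ ω₁ ν₁ Vh₁ Ψ₁ := by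
    ext x
    simp [hf₁, hV₁, schroedingerSource, fourierPotential, lap3_eq_laplacian]
  obtain rfl : f₂ = schroedingerSource ℏ ω₂ ν₂ Vh₂ Ψ₂ := by
    ext x
    simp [hf₂, hV₂, schroedingerSource, fourierPotential, lap3_eq_laplacian]
  obtain rfl : W = crossWigner ℏ Ψ₁ Ψ₂ := by
    ext x p
    simp [hW, crossWigner, wignerCorrelation, mul_assoc]
  intro x p
  rw [two_frequency_wigner_moyal_schroedinger_general hℏ.ne' ω₁ ω₂ ν₁ ν₂ Ψ₁ Ψ₂ hVh₁i hVh₂i, hF]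
  simp [crossWigner, wignerCorrelation, mul_assoc]
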